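/- arXiv:2207.14102 — 3 statements merged into one kernel-verified Lean document; each statement's English description precedes it below -/
import Mathlib

section
/- The ratio (number of permutations ω ∈ S_n whose quantum complexity is at least n²/32 − 3) / n! tends to 1 as n → ∞. In other words, almost all permutations in S_n have quantum complexity at least n²/32 − 3. -/
/-!
Fix `n = k + 1` and identify `{1, …, n}` with the cyclic group `Fin n`. Let `δ x` be the distance
from `x` to `0` around the cycle, and for a shift `a` put `D a ω = ∑ i, δ (ω i - i - a)`, the total
displacement of `ω` relative to the rotation by `a`.

Multiplying `ω` on the left by `τ^{±1}` only replaces `a` by `a ± 1`, and multiplying by `σ` moves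
two of the values by one step, so it raises `D a` by at most `2`. Hence a permutation given by a
word of length `m` satisfies `D a ω ≤ 2 m` for some shift `a` (`exists_shift_of_word`).

Few permutations have small total displacement. With `q = exp (-16/n)`, an exponential Markov bound
and "permanent ≤ product of row sums" give
`#{ω | D a ω ≤ n²/16} ≤ eⁿ (∑ x, q ^ δ x)ⁿ ≤ eⁿ (n/8 + 2)ⁿ ≤ e¹⁶ (e n / 8)ⁿ`
(`card_small_displacement`). Since `n! ≥ (n/e)ⁿ`, a union bound over the `n` shifts bounds the
proportion of permutations of complexity below `n²/32 - 3` by `e¹⁶ n (e²/8)ⁿ`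
(`card_short_words`), which tends to `0` because `e² < 8`.
-/

/-- The transposition `σ ∈ S_n` swapping the elements `1` and `2` of `{1, …, n}`
(represented 0-indexed by `Fin n`, so it swaps the indices `0` and `1`). -/
def sigmaGen (n : ℕ) : Equiv.Perm (Fin n) :=
  if h : 2 ≤ n then Equiv.swap ⟨0, by omega⟩ ⟨1, by omega⟩ else 1

/-- The generating set `{σ, τ, τ⁻¹}`, where `τ = finRotate n` is the cyclic permutation
sending `k` to `k+1` for `1 ≤ k ≤ n-1` and `n` to `1`. -/
def gates (n : ℕ) : Set (Equiv.Perm (Fin n)) :=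
  {sigmaGen n, finRotate n, (finRotate n)⁻¹}

open Finset

/-- The distance from `x` to `0` around the cycle `Fin (k + 1)`. -/
def cycDist {k : ℕ} (x : Fin (k + 1)) : ℕ := min x.val (-x).val

/-- The total displacement of `ω` relative to the rotation by `a`. -/
def displacement {k : ℕ} (a : Fin (k + 1)) (ω : Equiv.Perm (Fin (k + 1))) : ℕ :=
  ∑ i, cycDist (ω i - i - a)

lemma val_add_one_le {k : ℕ} (x : Fin (k + 1)) : (x + 1).val ≤ x.val + 1 := by
  rw [Fin.val_add_one]; split_ifs <;> omega

lemma cycDist_neg {k : ℕ} (x : Fin (k + 1)) : cycDist (-x) = cycDist x := by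
  simp [cycDist, min_comm]

lemma cycDist_add_one_le {k : ℕ} (x : Fin (k + 1)) : cycDist (x + 1) ≤ cycDist x + 1 := by
  unfold cycDist
  have h1 := val_add_one_le x
  have h2 : (-(x + 1)).val ≤ (-x).val ∨ x = 0 := by
    by_cases hx : x = 0
    · exact Or.inr hx
    left
    have h0 : -x ≠ 0 := neg_ne_zero.mpr hx
    rw [neg_add, ← sub_eq_add_neg, Fin.val_sub_one_of_ne_zero h0]
    omega
  rcases h2 with h2 | rfl
  · omega
  · have := val_add_one_le (0 : Fin (k + 1))
    simp only [Fin.val_zero] at this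
    omega

lemma cycDist_sub_one_le {k : ℕ} (x : Fin (k + 1)) : cycDist (x - 1) ≤ cycDist x + 1 := by
  have := cycDist_add_one_le (-x)
  rwa [cycDist_neg, show -x + 1 = -(x - 1) by abel, cycDist_neg] at this

lemma sigmaGen_apply_zero {k : ℕ} : sigmaGen (k + 1) 0 = 1 := by
  unfold sigmaGen
  split_ifs with h
  · obtain ⟨k, rfl⟩ : ∃ m, k = m + 1 := ⟨k - 1, by omega⟩
    exact Equiv.swap_apply_left _ _
  · obtain rfl : k = 0 := by omega
    rfl

lemma sigmaGen_apply_one {k : ℕ} : sigmaGen (k + 1) 1 = 0 := by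
  unfold sigmaGen
  split_ifs with h
  · obtain ⟨k, rfl⟩ : ∃ m, k = m + 1 := ⟨k - 1, by omega⟩
    exact Equiv.swap_apply_right _ _
  · obtain rfl : k = 0 := by omega
    rfl

lemma sigmaGen_apply_of_ne {k : ℕ} {x : Fin (k + 1)} (h0 : x ≠ 0) (h1 : x ≠ 1) :
    sigmaGen (k + 1) x = x := by
  unfold sigmaGen
  split_ifs with h
  · obtain ⟨k, rfl⟩ : ∃ m, k = m + 1 := ⟨k - 1, by omega⟩
    exact Equiv.swap_apply_of_ne_of_ne h0 h1
  · rfl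

lemma cycDist_sigmaGen_le {k : ℕ} (x b : Fin (k + 1)) :
    cycDist (sigmaGen (k + 1) x - b) ≤
      cycDist (x - b) + ((if x = 0 then 1 else 0) + (if x = 1 then 1 else 0)) := by
  by_cases h0 : x = 0
  · subst h0
    have := cycDist_add_one_le (0 - b)
    rw [sigmaGen_apply_zero, if_pos rfl, show (1 : Fin (k + 1)) - b = 0 - b + 1 by abel]
    omega
  by_cases h1 : x = 1
  · subst h1
    have := cycDist_sub_one_le (1 - b)
    rw [sigmaGen_apply_one, if_pos rfl, show (0 : Fin (k + 1)) - b = 1 - b - 1 by abel]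
    omega
  · rw [sigmaGen_apply_of_ne h0 h1]
    omega

lemma displacement_sigmaGen_mul_le {k : ℕ} (a : Fin (k + 1)) (ω : Equiv.Perm (Fin (k + 1))) :
    displacement a (sigmaGen (k + 1) * ω) ≤ displacement a ω + 2 := by
  have hcount : ∀ c : Fin (k + 1), ∑ i, (if ω i = c then 1 else 0) = 1 := fun c => by
    rw [Equiv.sum_comp ω (fun x => if x = c then 1 else 0)]
    simp
  calc displacement a (sigmaGen (k + 1) * ω)
      ≤ ∑ i, (cycDist (ω i - i - a) +
          ((if ω i = 0 then 1 else 0) + (if ω i = 1 then 1 else 0))) := by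
        refine sum_le_sum fun i _ => ?_
        have := cycDist_sigmaGen_le (ω i) (i + a)
        rwa [← sub_sub, ← sub_sub] at this
    _ = displacement a ω + 2 := by
        rw [sum_add_distrib, sum_add_distrib, hcount, hcount]
        rfl

/-- Up to a rotation, a word of length `m` displaces the points by at most `2 m` in total. -/
lemma exists_shift_of_word {k : ℕ} (L : List (Equiv.Perm (Fin (k + 1))))
    (hL : ∀ ρ ∈ L, ρ ∈ gates (k + 1)) : ∃ a, displacement a L.prod ≤ 2 * L.length := by
  induction L with
  | nil => exact ⟨0, by simp [displacement, cycDist]⟩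
  | cons ρ L ih =>
    obtain ⟨a, ha⟩ := ih fun ρ' h => hL ρ' (List.mem_cons_of_mem _ h)
    rw [List.prod_cons, List.length_cons]
    rcases hL ρ List.mem_cons_self with rfl | rfl | h
    · exact ⟨a, (displacement_sigmaGen_mul_le a _).trans (by omega)⟩
    · refine ⟨a + 1, le_trans (le_of_eq ?_) (ha.trans (by omega))⟩
      refine sum_congr rfl fun i _ => ?_
      rw [Equiv.Perm.mul_apply, finRotate_apply]
      congr 1
      abel
    · obtain rfl : ρ = (finRotate (k + 1))⁻¹ := h
      refine ⟨a - 1, le_trans (le_of_eq ?_) (ha.trans (by omega))⟩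
      refine sum_congr rfl fun i _ => ?_
      have hinv : (finRotate (k + 1))⁻¹ (L.prod i) = L.prod i - 1 := by
        rw [Equiv.Perm.inv_eq_iff_eq, finRotate_apply, sub_add_cancel]
      rw [Equiv.Perm.mul_apply, hinv]
      congr 1
      abel

lemma sum_pow_cycDist_le {k : ℕ} {q : ℝ} (h0 : 0 ≤ q) (h1 : q < 1) :
    ∑ x : Fin (k + 1), q ^ cycDist x ≤ 2 / (1 - q) := by
  have hgeom : ∑ x : Fin (k + 1), q ^ x.val ≤ 1 / (1 - q) := by
    rw [Fin.sum_univ_eq_sum_range (fun i => q ^ i), geom_sum_eq h1.ne, ← neg_div_neg_eq]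
    have : 0 ≤ q ^ (k + 1) := by positivity
    exact div_le_div₀ zero_le_one (by linarith) (by linarith) (by linarith)
  calc ∑ x : Fin (k + 1), q ^ cycDist x
      ≤ ∑ x : Fin (k + 1), (q ^ x.val + q ^ (-x).val) := by
        refine sum_le_sum fun x _ => ?_
        have hx : 0 ≤ q ^ x.val := by positivity
        have hy : 0 ≤ q ^ (-x).val := by positivity
        rcases min_choice x.val (-x).val with h | h <;> rw [cycDist, h] <;> linarith
    _ = ∑ x : Fin (k + 1), q ^ x.val + ∑ x : Fin (k + 1), q ^ x.val := by
        rw [sum_add_distrib]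
        congr 1
        exact Equiv.sum_comp (Equiv.neg (Fin (k + 1))) (fun x => q ^ x.val)
    _ ≤ 2 / (1 - q) := by
        rw [show 2 / (1 - q) = 1 / (1 - q) + 1 / (1 - q) by ring]
        linarith

/-- The permanent of a nonnegative matrix whose rows are rearrangements of one vector is at most
the corresponding power of the row sum. -/
lemma sum_pow_displacement_le {k : ℕ} (a : Fin (k + 1)) {q : ℝ} (h0 : 0 ≤ q) :
    ∑ ω : Equiv.Perm (Fin (k + 1)), q ^ displacement a ω ≤
      (∑ x : Fin (k + 1), q ^ cycDist x) ^ (k + 1) := by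
  calc ∑ ω : Equiv.Perm (Fin (k + 1)), q ^ displacement a ω
      = ∑ ω : Equiv.Perm (Fin (k + 1)), ∏ i, q ^ cycDist (ω i - i - a) := by
        simp only [displacement, prod_pow_eq_pow_sum]
    _ = ∑ f ∈ (univ : Finset (Equiv.Perm (Fin (k + 1)))).map
          ⟨fun ω : Equiv.Perm (Fin (k + 1)) => (⇑ω : Fin (k + 1) → Fin (k + 1)),
            DFunLike.coe_injective⟩,
          ∏ i, q ^ cycDist (f i - i - a) := by
        rw [sum_map]
        rfl
    _ ≤ ∑ f : Fin (k + 1) → Fin (k + 1), ∏ i, q ^ cycDist (f i - i - a) :=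
        sum_le_sum_of_subset_of_nonneg (subset_univ _) fun f _ _ =>
          prod_nonneg fun i _ => by positivity
    _ = ∏ i : Fin (k + 1), ∑ j : Fin (k + 1), q ^ cycDist (j - i - a) := by
        rw [prod_univ_sum, Fintype.piFinset_univ]
    _ = (∑ x : Fin (k + 1), q ^ cycDist x) ^ (k + 1) := by
        have hrow : ∀ i : Fin (k + 1),
            ∑ j : Fin (k + 1), q ^ cycDist (j - i - a) = ∑ x : Fin (k + 1), q ^ cycDist x :=
          fun i => by
            simp only [sub_sub]
            exact Equiv.sum_comp (Equiv.subRight (i + a)) (fun x => q ^ cycDist x)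
        simp [hrow]

/-- Exponential Markov bound for the total displacement; the choice `q = exp (-16 / n)` is
asymptotically optimal for the threshold `n² / 16`. -/
lemma card_small_displacement {k : ℕ} (a : Fin (k + 1)) :
    (#{ω : Equiv.Perm (Fin (k + 1)) | (displacement a ω : ℝ) ≤ ((k + 1 : ℕ) : ℝ) ^ 2 / 16} : ℝ) ≤
      Real.exp 16 * (Real.exp 1 * ((k + 1 : ℕ) : ℝ) / 8) ^ (k + 1) := by
  set n : ℝ := ((k + 1 : ℕ) : ℝ) with hn
  have hn0 : 0 < n := by rw [hn]; positivity
  set t : ℝ := 16 / n with ht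
  have ht0 : 0 < t := by positivity
  set q : ℝ := Real.exp (-t) with hq
  have hq0 : 0 < q := Real.exp_pos _
  have hqt : q * (1 + t) ≤ 1 := by
    have h := Real.add_one_le_exp t
    have h2 : q * Real.exp t = 1 := by rw [hq, ← Real.exp_add]; simp
    nlinarith
  have hq1 : q < 1 := by nlinarith
  have hsum : ∑ x : Fin (k + 1), q ^ cycDist x ≤ n / 8 * (1 + t) := by
    refine (sum_pow_cycDist_le hq0.le hq1).trans ?_
    rw [div_le_iff₀ (by linarith)]
    have hnt : n * t = 16 := by rw [ht]; field_simp
    nlinarith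
  have hexp : (1 + t) ^ (k + 1) ≤ Real.exp 16 := by
    have h := pow_le_pow_left₀ (by positivity) (Real.add_one_le_exp t) (k + 1)
    rw [← Real.exp_nat_mul, ← hn, show n * t = 16 by rw [ht]; field_simp] at h
    rwa [add_comm]
  calc (#{ω : Equiv.Perm (Fin (k + 1)) | (displacement a ω : ℝ) ≤ n ^ 2 / 16} : ℝ)
      = ∑ ω : Equiv.Perm (Fin (k + 1)) with (displacement a ω : ℝ) ≤ n ^ 2 / 16, (1 : ℝ) := by
        simp
    _ ≤ ∑ ω : Equiv.Perm (Fin (k + 1)) with (displacement a ω : ℝ) ≤ n ^ 2 / 16,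
          Real.exp n * q ^ displacement a ω := by
        refine sum_le_sum fun ω hω => ?_
        rw [mem_filter] at hω
        rw [hq, ← Real.exp_nat_mul, ← Real.exp_add]
        refine Real.one_le_exp ?_
        have h := mul_le_mul_of_nonneg_right hω.2 ht0.le
        rw [show n ^ 2 / 16 * t = n by rw [ht]; field_simp] at h
        linarith
    _ ≤ ∑ ω : Equiv.Perm (Fin (k + 1)), Real.exp n * q ^ displacement a ω :=
        sum_le_sum_of_subset_of_nonneg (filter_subset _ _) fun _ _ _ => by positivity
    _ ≤ Real.exp n * (n / 8 * (1 + t)) ^ (k + 1) := by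
        rw [← mul_sum]
        refine mul_le_mul_of_nonneg_left ?_ (Real.exp_pos _).le
        refine (sum_pow_displacement_le a hq0.le).trans ?_
        exact pow_le_pow_left₀ (sum_nonneg fun _ _ => by positivity) hsum _
    _ = (1 + t) ^ (k + 1) * (Real.exp 1 * n / 8) ^ (k + 1) := by
        rw [← mul_one n, hn, Real.exp_nat_mul, ← mul_pow, ← mul_pow]
        congr 1
        ring
    _ ≤ Real.exp 16 * (Real.exp 1 * n / 8) ^ (k + 1) :=
        mul_le_mul_of_nonneg_right hexp (by positivity)

open Classical in
/-- Union bound over the `k + 1` shifts, combined with `n ^ n ≤ e ^ n * n!`. -/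
lemma card_short_words (k : ℕ) :
    (#{ω : Equiv.Perm (Fin (k + 1)) | ¬ ∀ L : List (Equiv.Perm (Fin (k + 1))),
        (∀ ρ ∈ L, ρ ∈ gates (k + 1)) → L.prod = ω →
          ((k + 1 : ℕ) : ℝ) ^ 2 / 32 - 3 ≤ (L.length : ℝ)} : ℝ) / ((k + 1).factorial : ℝ) ≤
      Real.exp 16 * (((k + 1 : ℕ) : ℝ) * (Real.exp 1 ^ 2 / 8) ^ (k + 1)) := by
  set n : ℝ := ((k + 1 : ℕ) : ℝ) with hn
  have hn0 : 0 < n := by rw [hn]; positivity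
  have hsub : ({ω : Equiv.Perm (Fin (k + 1)) | ¬ ∀ L : List (Equiv.Perm (Fin (k + 1))),
        (∀ ρ ∈ L, ρ ∈ gates (k + 1)) → L.prod = ω → n ^ 2 / 32 - 3 ≤ (L.length : ℝ)} :
          Finset (Equiv.Perm (Fin (k + 1)))) ⊆
      univ.biUnion fun a : Fin (k + 1) =>
        {ω : Equiv.Perm (Fin (k + 1)) | (displacement a ω : ℝ) ≤ n ^ 2 / 16} := by
    intro ω hω
    rw [mem_filter] at hω
    obtain ⟨-, hω⟩ := hω
    push Not at hω
    obtain ⟨L, hL, rfl, hlen⟩ := hω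
    obtain ⟨a, ha⟩ := exists_shift_of_word L hL
    simp only [mem_biUnion, mem_univ, true_and, mem_filter]
    refine ⟨a, ?_⟩
    have ha' : (displacement a L.prod : ℝ) ≤ 2 * (L.length : ℝ) := by exact_mod_cast ha
    linarith
  have hcard : (#{ω : Equiv.Perm (Fin (k + 1)) | ¬ ∀ L : List (Equiv.Perm (Fin (k + 1))),
        (∀ ρ ∈ L, ρ ∈ gates (k + 1)) → L.prod = ω → n ^ 2 / 32 - 3 ≤ (L.length : ℝ)} : ℝ) ≤
      n * (Real.exp 16 * (Real.exp 1 * n / 8) ^ (k + 1)) := by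
    refine (Nat.cast_le.mpr ((card_le_card hsub).trans card_biUnion_le)).trans ?_
    rw [Nat.cast_sum]
    refine (sum_le_sum fun a _ => card_small_displacement a).trans (le_of_eq ?_)
    rw [sum_const, card_univ, Fintype.card_fin, nsmul_eq_mul, hn]
  have hfac : n ^ (k + 1) ≤ Real.exp 1 ^ (k + 1) * ((k + 1).factorial : ℝ) := by
    have h := Real.pow_div_factorial_le_exp n hn0.le (k + 1)
    rwa [div_le_iff₀ (by positivity), hn, ← Real.exp_one_pow] at h
  rw [div_le_iff₀ (by positivity)]
  refine hcard.trans ?_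
  calc n * (Real.exp 16 * (Real.exp 1 * n / 8) ^ (k + 1))
      = n * Real.exp 16 * (Real.exp 1 / 8) ^ (k + 1) * n ^ (k + 1) := by
        rw [mul_assoc _ _ (n ^ (k + 1)), ← mul_pow]
        ring_nf
    _ ≤ n * Real.exp 16 * (Real.exp 1 / 8) ^ (k + 1) *
          (Real.exp 1 ^ (k + 1) * ((k + 1).factorial : ℝ)) :=
        mul_le_mul_of_nonneg_left hfac (by positivity)
    _ = Real.exp 16 * (n * (Real.exp 1 ^ 2 / 8) ^ (k + 1)) * ((k + 1).factorial : ℝ) := by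
        rw [show Real.exp 1 ^ 2 / 8 = Real.exp 1 / 8 * Real.exp 1 by ring, mul_pow]
        ring

lemma tendsto_error :
    Filter.Tendsto (fun n : ℕ => Real.exp 16 * ((n : ℝ) * (Real.exp 1 ^ 2 / 8) ^ n))
      Filter.atTop (nhds 0) := by
  have he := Real.exp_one_lt_d9
  have he0 := Real.exp_pos 1
  have h := tendsto_self_mul_const_pow_of_lt_one (r := Real.exp 1 ^ 2 / 8) (by positivity)
    (by nlinarith)
  simpa using h.const_mul (Real.exp 16)

/-- Theorem 1.3: the ratio of the number of permutations in `S_n` with quantum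
complexity at least `n²/32 - 3` (i.e. every factorization into gates from
`{σ, τ, τ⁻¹}` has length at least `n²/32 - 3`) over `n!` tends to `1` as
`n → ∞`. -/
theorem almost_all_quadratic_lower_bound :
    Filter.Tendsto (fun n : ℕ =>
      (Nat.card {ω : Equiv.Perm (Fin n) //
        ∀ L : List (Equiv.Perm (Fin n)), (∀ ρ ∈ L, ρ ∈ gates n) → L.prod = ω →
          (n : ℝ) ^ 2 / 32 - 3 ≤ (L.length : ℝ)} : ℝ) / (n.factorial : ℝ))
      Filter.atTop (nhds 1) := by
  classical
  have hlow : Filter.Tendsto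
      (fun n : ℕ => 1 - Real.exp 16 * ((n : ℝ) * (Real.exp 1 ^ 2 / 8) ^ n))
      Filter.atTop (nhds 1) := by
    simpa using tendsto_error.const_sub 1
  -- Good and bad permutations partition `S_n`.
  have hsplit : ∀ n : ℕ, ∀ P : Equiv.Perm (Fin n) → Prop,
      (Nat.card {ω // P ω} : ℝ) / (n.factorial : ℝ) +
        (#{ω : Equiv.Perm (Fin n) | ¬ P ω} : ℝ) / (n.factorial : ℝ) = 1 := by
    intro n P
    rw [← add_div, div_eq_one_iff_eq (by positivity), Nat.card_eq_fintype_card,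
      Fintype.card_subtype]
    have h := card_filter_add_card_filter_not (s := (univ : Finset (Equiv.Perm (Fin n)))) P
    rw [card_univ, Fintype.card_perm, Fintype.card_fin] at h
    exact_mod_cast h
  refine tendsto_of_tendsto_of_tendsto_of_le_of_le' hlow tendsto_const_nhds ?_ ?_
  · filter_upwards [Filter.eventually_ge_atTop 1] with n hn
    obtain ⟨k, rfl⟩ : ∃ k, n = k + 1 := ⟨n - 1, by omega⟩
    have h1 := hsplit (k + 1) fun ω => ∀ L : List (Equiv.Perm (Fin (k + 1))),
      (∀ ρ ∈ L, ρ ∈ gates (k + 1)) → L.prod = ω →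
        ((k + 1 : ℕ) : ℝ) ^ 2 / 32 - 3 ≤ (L.length : ℝ)
    have h2 := card_short_words k
    linarith
  · refine Filter.Eventually.of_forall fun n => ?_
    have h1 := hsplit n fun ω => ∀ L : List (Equiv.Perm (Fin n)),
      (∀ ρ ∈ L, ρ ∈ gates n) → L.prod = ω → (n : ℝ) ^ 2 / 32 - 3 ≤ (L.length : ℝ)
    rw [← h1]
    exact le_add_of_nonneg_right (by positivity)
end

section
/- Fix real numbers b and c with 0 < b < 1/2 and 0 < c < min{4b, 1}. For every ε > 0 there exists N such that for all n ≥ N, every (b,c)-bumpy permutation ω ∈ S_n has quantum complexity at least ((4bc − c²)/2 − ε)·n²; that is, any factorization ω = ρ_1 ⋯ ρ_l with each ρ_i ∈ {σ, τ, τ⁻¹} satisfies l ≥ ((4bc − c²)/2 − ε)·n². -/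
/-- The circle distance `d(x, y) = min {|x - y|, n - |x - y|}` on `{1, …, n}`. -/
def cdist (n x y : ℕ) : ℕ := min (Nat.dist x y) (n - Nat.dist x y)

/-- Remark 5.3: a permutation `ω` of `{1, …, n}` is `(b, c)`-bumpy if for every
`k ∈ {0, 1, …, n-1}`, the number of indices `i ∈ {1, …, n}` with
`d(k + ω(i) (mod n), i) ≥ b·n` is at least `c·n`.  Here `i : Fin n` represents the
element `(i : ℕ) + 1`, and `k + ω(i) (mod n)` is the representative
`(k + (ω i : ℕ)) % n + 1 ∈ {1, …, n}` of `k + ω(i)` modulo `n`. -/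
def BCBumpy (b c : ℝ) (n : ℕ) (ω : Equiv.Perm (Fin n)) : Prop :=
  ∀ k : ℕ, k < n →
    c * (n : ℝ) ≤
      (Nat.card {i : Fin n //
        b * (n : ℝ) ≤ (cdist n ((k + (ω i : ℕ)) % n + 1) ((i : ℕ) + 1) : ℝ)} : ℝ)

/-! ### Passes, winding and displacements of a word -/

open Equiv in
lemma sigmaGen_eq (m : ℕ) : sigmaGen (m + 2) = swap 0 1 := by
  simp [sigmaGen]

/-- The number of times the word `L`, whose last letter acts first, uses `σ` to move token `i`
from position `0` to position `1` and token `j` from position `1` to position `0`. -/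
def passes (m : ℕ) : List (Equiv.Perm (Fin (m + 2))) → Fin (m + 2) → Fin (m + 2) → ℕ
  | [], _, _ => 0
  | ρ :: L, i, j =>
    passes m L i j + if ρ = sigmaGen (m + 2) ∧ L.prod i = 0 ∧ L.prod j = 1 then 1 else 0

/-- The exponent sum of `τ` in a word of gates. A letter equal to `σ` counts `0`, also for `n = 2`,
where `σ = τ`. -/
def winding (m : ℕ) : List (Equiv.Perm (Fin (m + 2))) → ℤ
  | [] => 0
  | ρ :: L => winding m L +
      if ρ = sigmaGen (m + 2) then 0 else if ρ = finRotate (m + 2) then 1 else -1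

/-- The net displacement of token `i` caused by the occurrences of `σ` in `L`, as an integer
(not reduced modulo `n`). -/
def disp (m : ℕ) (L : List (Equiv.Perm (Fin (m + 2)))) (i : Fin (m + 2)) : ℤ :=
  ∑ j, ((passes m L i j : ℤ) - passes m L j i)

lemma sum_passes (m : ℕ) (L : List (Equiv.Perm (Fin (m + 2)))) :
    ∑ i, ∑ j, passes m L i j = L.count (sigmaGen (m + 2)) := by
  induction L with
  | nil => simp [passes]
  | cons ρ L ih =>
    simp only [passes, Finset.sum_add_distrib, ih, List.count_cons, beq_iff_eq]
    congr 1
    by_cases h : ρ = sigmaGen (m + 2)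
    · simp only [h, true_and, ite_and, ← Equiv.eq_symm_apply]
      simp
    · simp [h]

/-- A letter `σ` moves the token at position `0` by `1` and the token at position `1` by `-1`. -/
lemma disp_cons (m : ℕ) (ρ : Equiv.Perm (Fin (m + 2))) (L : List (Equiv.Perm (Fin (m + 2))))
    (i : Fin (m + 2)) :
    disp m (ρ :: L) i = disp m L i +
      if ρ = sigmaGen (m + 2) then
        (if L.prod i = 0 then 1 else 0) - (if L.prod i = 1 then 1 else 0) else 0 := by
  simp only [disp, passes]
  push_cast
  simp only [add_sub_add_comm, Finset.sum_add_distrib]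
  congr 1
  by_cases h : ρ = sigmaGen (m + 2)
  · simp only [h, true_and, ite_and, Finset.sum_sub_distrib, ← Equiv.eq_symm_apply]
    simp
  · simp [h]

lemma finRotate_modEq (m : ℕ) (p : Fin (m + 2)) :
    ((finRotate (m + 2) p : ℕ) : ℤ) ≡ (p : ℕ) + 1 [ZMOD ((m + 2 : ℕ) : ℤ)] := by
  rw [finRotate_apply, Fin.val_add]
  push_cast
  simp [Int.ModEq]

/-- Up to the common rotation `winding m L`, the word `L` moves token `i` by `disp m L i`. -/
lemma prod_modEq (m : ℕ) (L : List (Equiv.Perm (Fin (m + 2))))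
    (hL : ∀ ρ ∈ L, ρ ∈ gates (m + 2)) (i : Fin (m + 2)) :
    ((L.prod i : ℕ) : ℤ) ≡ (i : ℕ) + winding m L + disp m L i [ZMOD ((m + 2 : ℕ) : ℤ)] := by
  induction L with
  | nil => simp [winding, disp, passes]
  | cons ρ L ih =>
    have ih := ih fun ρ h => hL ρ (List.mem_cons_of_mem _ h)
    have hρ := hL ρ List.mem_cons_self
    rw [disp_cons, winding, List.prod_cons, Equiv.Perm.mul_apply]
    by_cases h : ρ = sigmaGen (m + 2)
    · simp only [h, if_true]
      rw [sigmaGen_eq]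
      by_cases h0 : L.prod i = 0
      · rw [h0] at ih ⊢
        have := ih.add_right 1
        simp only [Fin.val_zero, Equiv.swap_apply_left, Fin.val_one] at this ⊢
        convert this using 1
        · simp
        · simp; ring
      · by_cases h1 : L.prod i = 1
        · rw [h1] at ih ⊢
          have := ih.sub_right 1
          simp only [Fin.val_zero, Equiv.swap_apply_right, Fin.val_one] at this ⊢
          convert this using 1
          · simp
          · simp; ring
        · rw [Equiv.swap_apply_of_ne_of_ne h0 h1]
          simpa [h0, h1] using ih
    · by_cases h' : ρ = finRotate (m + 2)
      · simp only [h, if_false]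
        simp only [h', if_true]
        refine (finRotate_modEq m _).trans ?_
        convert ih.add_right 1 using 1
        ring
      · simp only [gates, Set.mem_insert_iff, Set.mem_singleton_iff, h, h', false_or] at hρ
        simp only [h, h', if_false]
        have h2 := finRotate_modEq m (ρ (L.prod i))
        have h3 : finRotate (m + 2) (ρ (L.prod i)) = L.prod i := by
          rw [hρ]; exact Equiv.apply_symm_apply _ _
        rw [h3] at h2
        have h4 := (h2.symm.trans ih).sub_right 1
        convert h4 using 1 <;> ring

/-! ### Shortest words -/

lemma exists_of_one_le_passes (m : ℕ) (i j : Fin (m + 2)) (L : List (Equiv.Perm (Fin (m + 2))))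
    (h : 1 ≤ passes m L i j) :
    ∃ L₁ L₂, L = L₁ ++ sigmaGen (m + 2) :: L₂ ∧ L₂.prod i = 0 ∧ L₂.prod j = 1 := by
  induction L with
  | nil => simp [passes] at h
  | cons ρ L ih =>
    rw [passes] at h
    split_ifs at h with hc
    · exact ⟨[], L, by simp [hc.1], hc.2⟩
    · obtain ⟨L₁, L₂, rfl, h2⟩ := ih h
      exact ⟨ρ :: L₁, L₂, rfl, h2⟩

/-- If `σ` moves `i` past `j` twice, deleting both occurrences of `σ` leaves the product unchanged:
the part of the word between them exchanges positions `0` and `1`, so it commutes with `σ`. -/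
lemma exists_shorter_of_two_le_passes (m : ℕ) (i j : Fin (m + 2))
    (L : List (Equiv.Perm (Fin (m + 2)))) (h : 2 ≤ passes m L i j) :
    ∃ L' : List (Equiv.Perm (Fin (m + 2))),
      L'.length < L.length ∧ L'.prod = L.prod ∧ ∀ ρ ∈ L', ρ ∈ L := by
  induction L with
  | nil => simp [passes] at h
  | cons ρ L ih =>
    rw [passes] at h
    split_ifs at h with hc
    · obtain ⟨L₁, L₂, rfl, hi, hj⟩ := exists_of_one_le_passes m i j L (by omega)
      obtain ⟨hρ, hi', hj'⟩ := hc
      refine ⟨L₁ ++ L₂, by simp, ?_, by simp; tauto⟩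
      simp only [List.prod_append, List.prod_cons, Equiv.Perm.mul_apply, hi, hj, sigmaGen_eq,
        Equiv.swap_apply_left, Equiv.swap_apply_right] at hi' hj' ⊢
      have key := Equiv.mul_swap_eq_swap_mul L₁.prod 0 1
      rw [hi', hj', Equiv.swap_comm (1 : Fin (m + 2)) 0] at key
      rw [hρ, sigmaGen_eq, ← mul_assoc L₁.prod, key, ← mul_assoc, ← mul_assoc,
        Equiv.swap_mul_self, one_mul]
    · obtain ⟨L', h1, h2, h3⟩ := ih h
      exact ⟨ρ :: L', by simpa using h1, by simp [h2], by simp; tauto⟩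

lemma two_mul_count_le_or_adjacent {α : Type*} [DecidableEq α] (a : α) :
    ∀ L : List α, 2 * L.count a ≤ L.length + 1 ∨ ∃ L₁ L₂, L = L₁ ++ a :: a :: L₂
  | [] => by simp
  | [x] => by
    left
    have := List.count_le_length (a := a) (l := [x])
    simp at this ⊢; omega
  | x :: y :: L => by
    by_cases h : x = a ∧ y = a
    · exact Or.inr ⟨[], L, by simp [h.1, h.2]⟩
    · rcases two_mul_count_le_or_adjacent a L with h1 | ⟨L₁, L₂, rfl⟩
      · left
        simp only [List.count_cons, List.length_cons, beq_iff_eq]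
        split_ifs <;> first | omega | (exfalso; tauto)
      · exact Or.inr ⟨x :: y :: L₁, L₂, rfl⟩

/-! ### The counting inequality -/

/-- The counting inequality behind the lower bound: each pass contributes at most `1`
to the left-hand side, except that moving a token of `R` past a token of `T` contributes `2`. -/
lemma sum_disp_sub_le (m : ℕ) (L : List (Equiv.Perm (Fin (m + 2))))
    (hL : ∀ i j, passes m L i j ≤ 1) (R T : Finset (Fin (m + 2))) (hRT : Disjoint R T) :
    ∑ i ∈ R, disp m L i - ∑ i ∈ T, disp m L i
      ≤ (L.count (sigmaGen (m + 2)) : ℤ) + R.card * T.card := by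
  set f : Fin (m + 2) → ℤ := fun i => (if i ∈ R then 1 else 0) - (if i ∈ T then 1 else 0) with hf
  have h1 : ∑ i ∈ R, disp m L i - ∑ i ∈ T, disp m L i = ∑ i, f i * disp m L i := by
    simp [hf, sub_mul, Finset.sum_sub_distrib]
  -- Summation by parts: exchange the names of `i` and `j` in the terms `passes m L j i`.
  have h2 : ∑ i, f i * disp m L i = ∑ i, ∑ j, (passes m L i j : ℤ) * (f i - f j) := by
    have : ∑ i, ∑ j, f i * (passes m L j i : ℤ) = ∑ i, ∑ j, f j * (passes m L i j : ℤ) :=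
      Finset.sum_comm
    simp only [disp, Finset.mul_sum, mul_sub, Finset.sum_sub_distrib, this]
    simp only [mul_comm]
  have h3 : ∀ i j, (passes m L i j : ℤ) * (f i - f j)
      ≤ passes m L i j + (if i ∈ R then 1 else 0) * (if j ∈ T then 1 else 0) := by
    intro i j
    have hp : (passes m L i j : ℤ) = 0 ∨ (passes m L i j : ℤ) = 1 := by
      have := hL i j; omega
    have hi : i ∈ R → i ∉ T := fun a b => Finset.disjoint_left.1 hRT a b
    have hj : j ∈ R → j ∉ T := fun a b => Finset.disjoint_left.1 hRT a b
    simp only [hf]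
    rcases hp with hp | hp <;> rw [hp] <;> split_ifs <;> norm_num
  rw [h1, h2]
  refine (Finset.sum_le_sum fun i _ => Finset.sum_le_sum fun j _ => h3 i j).trans ?_
  simp only [Finset.sum_add_distrib, ← Finset.sum_mul_sum]
  have := sum_passes m L
  rw [← this]
  simp

lemma cdist_le_natAbs (n u v : ℕ) (x : ℤ) (hu : u < n) (hv : v < n)
    (h : (u : ℤ) ≡ v + x [ZMOD (n : ℤ)]) : (cdist n (u + 1) (v + 1) : ℤ) ≤ |x| := by
  obtain ⟨t, ht⟩ := h.dvd
  rw [Int.abs_eq_natAbs, Nat.cast_le]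
  unfold cdist Nat.dist
  rcases lt_trichotomy t 0 with h0 | h0 | h0
  · have : (n : ℤ) * t ≤ n * (-1) := mul_le_mul_of_nonneg_left (by omega) (by omega)
    omega
  · subst h0
    omega
  · have : (n : ℤ) * 1 ≤ n * t := mul_le_mul_of_nonneg_left (by omega) (by omega)
    omega

/-! ### The lower bound for bumpy permutations -/

/-- The bound with explicit lower-order terms, for a word `L` such that no shorter word in
the letters of `L` has the same product. -/
lemma length_bound_of_minimal (b c : ℝ) (hb0 : 0 < b) (hc0 : 0 < c) (m : ℕ)
    (L : List (Equiv.Perm (Fin (m + 2)))) (hL : ∀ ρ ∈ L, ρ ∈ gates (m + 2))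
    (hω : BCBumpy b c (m + 2) L.prod)
    (hmin : ∀ L' : List (Equiv.Perm (Fin (m + 2))), L'.length < L.length → L'.prod = L.prod →
      ¬ ∀ ρ ∈ L', ρ ∈ L) :
    (4 * b * c - c ^ 2) / 2 * ((m + 2 : ℕ) : ℝ) ^ 2 - c * ((m + 2 : ℕ) : ℝ) - 3 / 2
      ≤ (L.length : ℝ) := by
  have hpass : ∀ i j, passes m L i j ≤ 1 := by
    intro i j
    by_contra! hlt
    obtain ⟨L', h1, h2, h3⟩ := exists_shorter_of_two_le_passes m i j L hlt
    exact hmin L' h1 h2 h3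
  have hcount : 2 * L.count (sigmaGen (m + 2)) ≤ L.length + 1 := by
    rcases two_mul_count_le_or_adjacent (sigmaGen (m + 2)) L with h | ⟨L₁, L₂, rfl⟩
    · exact h
    · refine absurd ?_ (hmin (L₁ ++ L₂) (by simp) ?_)
      · simp; tauto
      · rw [List.prod_append, List.prod_append, List.prod_cons, List.prod_cons,
          ← mul_assoc (sigmaGen _), sigmaGen_eq, Equiv.swap_mul_self, one_mul]
  -- The rotation `k` that cancels the winding of the word.
  set k : ℕ := ((-winding m L) % ((m + 2 : ℕ) : ℤ)).toNat with hk
  have hk0 : (0 : ℤ) ≤ (-winding m L) % ((m + 2 : ℕ) : ℤ) := Int.emod_nonneg _ (by omega)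
  have hk1 : (-winding m L) % ((m + 2 : ℕ) : ℤ) < ((m + 2 : ℕ) : ℤ) := Int.emod_lt_of_pos _ (by omega)
  have hkmod : (k : ℤ) ≡ -winding m L [ZMOD ((m + 2 : ℕ) : ℤ)] := by
    rw [hk, Int.toNat_of_nonneg hk0]
    exact Int.mod_modEq _ _
  have hbump := hω k (by omega)
  rw [Nat.card_eq_fintype_card, Fintype.card_subtype] at hbump
  set B := Finset.univ.filter fun i : Fin (m + 2) =>
    b * ((m + 2 : ℕ) : ℝ) ≤ (cdist (m + 2) ((k + (L.prod i : ℕ)) % (m + 2) + 1) ((i : ℕ) + 1) : ℝ) with hB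
  have hBx : ∀ i ∈ B, b * ((m + 2 : ℕ) : ℝ) ≤ |(disp m L i : ℝ)| := by
    intro i hi
    refine (Finset.mem_filter.1 hi).2.trans ?_
    have h1 : (((k + (L.prod i : ℕ)) % (m + 2) : ℕ) : ℤ) ≡ (i : ℕ) + disp m L i [ZMOD ((m + 2 : ℕ) : ℤ)] := by
      have h2 := hkmod.add (prod_modEq m L hL i)
      rw [show (i : ℕ) + disp m L i = -winding m L + ((i : ℕ) + winding m L + disp m L i) by ring]
      rw [Int.natCast_mod, Nat.cast_add]
      exact (Int.mod_modEq _ _).trans h2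
    have := cdist_le_natAbs (m + 2) _ _ _ (Nat.mod_lt _ (by omega)) i.2 h1
    exact_mod_cast this
  -- Only `⌈c n⌉` tokens are kept: the bound `b n M - M ^ 2 / 4` is not monotone in `M`.
  obtain ⟨A, hAB, hA⟩ := Finset.exists_subset_card_eq (Nat.ceil_le.2 hbump)
  set M : ℕ := ⌈c * ((m + 2 : ℕ) : ℝ)⌉₊ with hM
  have hM1 : c * ((m + 2 : ℕ) : ℝ) ≤ M := Nat.le_ceil _
  have hM2 : (M : ℝ) < c * ((m + 2 : ℕ) : ℝ) + 1 := Nat.ceil_lt_add_one (by positivity)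
  set R := A.filter fun i => 0 ≤ disp m L i with hR
  set T := A.filter fun i => ¬ 0 ≤ disp m L i with hT
  have hRT : Disjoint R T := Finset.disjoint_filter_filter_not _ _ _
  have hcard : R.card + T.card = M := by
    rw [← hA]; exact Finset.card_filter_add_card_filter_not _
  have main := sum_disp_sub_le m L hpass R T hRT
  have mainR : (∑ i ∈ R, (disp m L i : ℝ)) - ∑ i ∈ T, (disp m L i : ℝ)
      ≤ (L.count (sigmaGen (m + 2)) : ℝ) + R.card * T.card := by exact_mod_cast main
  have hRsum : (R.card : ℝ) * (b * ((m + 2 : ℕ) : ℝ)) ≤ ∑ i ∈ R, (disp m L i : ℝ) := by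
    rw [← nsmul_eq_mul]
    refine Finset.card_nsmul_le_sum _ _ _ fun i hi => ?_
    obtain ⟨h1, h2⟩ := Finset.mem_filter.1 hi
    have h3 := hBx i (hAB h1)
    rwa [abs_of_nonneg (by exact_mod_cast h2)] at h3
  have hTsum : (T.card : ℝ) * (b * ((m + 2 : ℕ) : ℝ)) ≤ - ∑ i ∈ T, (disp m L i : ℝ) := by
    rw [← nsmul_eq_mul, ← Finset.sum_neg_distrib]
    refine Finset.card_nsmul_le_sum _ _ _ fun i hi => ?_
    obtain ⟨h1, h2⟩ := Finset.mem_filter.1 hi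
    have h3 := hBx i (hAB h1)
    rwa [abs_of_neg (by exact_mod_cast not_le.1 h2)] at h3
  have hcardR : (R.card : ℝ) + T.card = M := by exact_mod_cast hcard
  have hprod : (R.card : ℝ) * T.card ≤ (M : ℝ) ^ 2 / 4 := by
    rw [← hcardR]; nlinarith [sq_nonneg ((R.card : ℝ) - T.card)]
  have hcountR : 2 * (L.count (sigmaGen (m + 2)) : ℝ) ≤ L.length + 1 := by exact_mod_cast hcount
  have hsum : (M : ℝ) * (b * ((m + 2 : ℕ) : ℝ)) ≤ (L.count (sigmaGen (m + 2)) : ℝ) + (M : ℝ) ^ 2 / 4 := by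
    rw [← hcardR] at hprod ⊢
    linarith
  have hbn : 0 ≤ b * ((m + 2 : ℕ) : ℝ) := by positivity
  have e1 : c * ((m + 2 : ℕ) : ℝ) * (b * ((m + 2 : ℕ) : ℝ)) ≤ M * (b * ((m + 2 : ℕ) : ℝ)) := mul_le_mul_of_nonneg_right hM1 hbn
  have e2 : (M : ℝ) ^ 2 ≤ (c * ((m + 2 : ℕ) : ℝ) + 1) ^ 2 := pow_le_pow_left₀ (by positivity) hM2.le 2
  generalize ((m + 2 : ℕ) : ℝ) = n at *
  nlinarith

/-- Remark 5.3: for `0 < b < 1/2` and `0 < c < min {4b, 1}`, any `(b, c)`-bumpy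
permutation has quadratic quantum complexity lower bound with `(4bc - c²)/2` as the
coefficient of `n²`: for every `ε > 0` there is `N` such that for all `n ≥ N`, every
factorization of a `(b, c)`-bumpy `ω ∈ S_n` into gates from `{σ, τ, τ⁻¹}` has length
at least `((4bc - c²)/2 - ε)·n²`. -/
theorem bc_bumpy_quadratic_lower_bound (b c : ℝ) (hb0 : 0 < b) (hb : b < 1 / 2)
    (hc0 : 0 < c) (hc : c < min (4 * b) 1) :
    ∀ ε : ℝ, 0 < ε → ∃ N : ℕ, ∀ n : ℕ, N ≤ n →
      ∀ ω : Equiv.Perm (Fin n), BCBumpy b c n ω →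
        ∀ L : List (Equiv.Perm (Fin n)), (∀ ρ ∈ L, ρ ∈ gates n) → L.prod = ω →
          ((4 * b * c - c ^ 2) / 2 - ε) * (n : ℝ) ^ 2 ≤ (L.length : ℝ) := by
  intro ε hε
  have hc1 : c < 1 := hc.trans_le (min_le_right _ _)
  -- For `n ≥ 5 / (2 ε)` the error term `c n + 3 / 2 ≤ 5 n / 2` is at most `ε n ^ 2`.
  refine ⟨max 2 ⌈5 / 2 / ε⌉₊, fun n hn ω hω L hL hprod => ?_⟩
  obtain ⟨m, rfl⟩ : ∃ m, n = m + 2 :=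
    ⟨n - 2, by have := (le_max_left _ _).trans hn; omega⟩
  have hN : 5 / 2 / ε ≤ ((m + 2 : ℕ) : ℝ) :=
    (Nat.le_ceil _).trans (by exact_mod_cast (le_max_right _ _).trans hn)
  rw [div_le_iff₀ hε] at hN
  have hn1 : (1 : ℝ) ≤ ((m + 2 : ℕ) : ℝ) := by exact_mod_cast (by omega : 1 ≤ m + 2)
  -- It suffices to treat a shortest word for `ω`.
  induction hl : L.length using Nat.strong_induction_on generalizing L with
  | _ l ih =>
    by_cases hmin : ∃ L' : List (Equiv.Perm (Fin (m + 2))),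
        L'.length < L.length ∧ L'.prod = L.prod ∧ ∀ ρ ∈ L', ρ ∈ L
    · obtain ⟨L', h1, h2, h3⟩ := hmin
      have := ih L'.length (hl ▸ h1) L' (fun ρ h => hL ρ (h3 ρ h)) (h2.trans hprod) rfl
      refine this.trans ?_
      rw [← hl]
      exact_mod_cast h1.le
    · push Not at hmin
      have := length_bound_of_minimal b c hb0 hc0 m L hL (hprod ▸ hω) (by
        intro L' h1 h2 h3
        obtain ⟨ρ, h4, h5⟩ := hmin L' h1 h2
        exact h5 (h3 ρ h4))
      rw [← hl]
      nlinarith [mul_le_mul_of_nonneg_right hN (zero_le_one.trans hn1)]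
end

section
/- Fix real numbers b and c with 0 < b < 1/2, 0 < c < min{4b, 1}, and 2eb + c < 1 (where e is Euler's number). Then the proportion of (b,c)-bumpy permutations in S_n, that is, (number of (b,c)-bumpy ω ∈ S_n)/n!, tends to 1 as n → ∞. -/
/-- A permutation prescribed on `A` is determined up to a permutation of the complement of `A`. -/
lemma card_perm_eqOn_le {α : Type*} [Fintype α] [DecidableEq α] (A : Finset α)
    (g : (a : α) → a ∈ A → α) :
    (Finset.univ.filter fun ω : Equiv.Perm α => (fun a (_ : a ∈ A) => ω a) = g).card
      ≤ (Fintype.card α - A.card).factorial := by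
  rcases Finset.eq_empty_or_nonempty
    (Finset.univ.filter fun ω : Equiv.Perm α => (fun a (_ : a ∈ A) => ω a) = g) with h | ⟨ω₀, h₀⟩
  · simp [h]
  · have hc : Fintype.card {f : Equiv.Perm α // ∀ a, ¬ (a ∉ A) → f a = a}
        = (Fintype.card α - A.card).factorial := by
      rw [← Fintype.card_congr (Equiv.Perm.subtypeEquivSubtypePerm (fun a => a ∉ A)),
        Fintype.card_perm, Fintype.card_subtype_compl]
      simp
    rw [← hc, Fintype.card_subtype]
    -- Composing with the inverse of one such permutation gives a permutation fixing `A` pointwise.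
    refine Finset.card_le_card_of_injOn (fun ω => ω₀⁻¹ * ω) ?_ ?_
    · intro ω hω
      simp only [Finset.coe_filter, Finset.mem_univ, true_and, Set.mem_ofPred_eq, not_not,
        Finset.mem_filter] at hω h₀ ⊢
      intro a ha
      have h : ω a = ω₀ a := congrFun (congrFun (hω.trans h₀.symm) a) ha
      simp [h]
    · intro x _ y _ hxy
      simpa using hxy

lemma card_perm_mapsTo_le {α : Type*} [Fintype α] [DecidableEq α] (A : Finset α)
    (F : α → Finset α) (W : ℕ) (hF : ∀ a, (F a).card ≤ W) :
    (Finset.univ.filter fun ω : Equiv.Perm α => ∀ a ∈ A, ω a ∈ F a).card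
      ≤ (Fintype.card α - A.card).factorial * W ^ A.card := by
  refine (Finset.card_le_mul_card_image_of_maps_to (t := A.pi F)
    (f := fun ω : Equiv.Perm α => fun a (_ : a ∈ A) => ω a) ?_
    (Fintype.card α - A.card).factorial ?_).trans ?_
  · intro ω hω
    simpa [Finset.mem_pi] using hω
  · intro g _
    refine le_trans (Finset.card_le_card ?_) (card_perm_eqOn_le A g)
    intro ω hω
    simp only [Finset.mem_filter, Finset.mem_univ, true_and] at hω ⊢
    exact hω.2
  · refine Nat.mul_le_mul_left _ ?_
    rw [Finset.card_pi]
    exact Finset.prod_le_pow_card _ _ _ fun a _ => hF a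

/-- Union bound over the `s`-element sets of indices that `ω` sends into the prescribed sets. -/
lemma card_perm_many_le {α : Type*} [Fintype α] [DecidableEq α]
    (F : α → Finset α) (W s : ℕ) (hF : ∀ a, (F a).card ≤ W) (hs : s ≤ Fintype.card α) :
    (Finset.univ.filter fun ω : Equiv.Perm α =>
      s ≤ (Finset.univ.filter fun a => ω a ∈ F a).card).card * s.factorial
      ≤ (Fintype.card α).factorial * W ^ s := by
  have h1 : (Finset.univ.filter fun ω : Equiv.Perm α =>
      s ≤ (Finset.univ.filter fun a => ω a ∈ F a).card).card
      ≤ (Fintype.card α).choose s * ((Fintype.card α - s).factorial * W ^ s) := by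
    have hsub : (Finset.univ.filter fun ω : Equiv.Perm α =>
      s ≤ (Finset.univ.filter fun a => ω a ∈ F a).card) ⊆
        (Finset.powersetCard s (Finset.univ : Finset α)).biUnion fun A =>
          Finset.univ.filter fun ω : Equiv.Perm α => ∀ a ∈ A, ω a ∈ F a := by
      intro ω hω
      simp only [Finset.mem_filter, Finset.mem_univ, true_and] at hω
      obtain ⟨A, hA, hAc⟩ := Finset.exists_subset_card_eq hω
      simp only [Finset.mem_biUnion, Finset.mem_powersetCard, Finset.mem_filter, Finset.mem_univ,
        true_and]
      exact ⟨A, ⟨Finset.subset_univ _, hAc⟩, fun a ha => by simpa using hA ha⟩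
    refine (Finset.card_le_card hsub).trans ?_
    refine (Finset.card_biUnion_le_card_mul _ _ ((Fintype.card α - s).factorial * W ^ s) ?_).trans
      ?_
    · intro A hA
      have hAc := (Finset.mem_powersetCard.1 hA).2
      have := card_perm_mapsTo_le A F W hF
      rwa [hAc] at this
    · simp [Finset.card_powersetCard]
  calc _ ≤ (Fintype.card α).choose s * ((Fintype.card α - s).factorial * W ^ s) * s.factorial :=
        Nat.mul_le_mul_right _ h1
    _ = ((Fintype.card α).choose s * s.factorial * (Fintype.card α - s).factorial) * W ^ s := by
        ring
    _ = _ := by rw [Nat.choose_mul_factorial_mul_factorial hs]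

/-- For a fixed shift, at most `2 m` values lie at circle distance less than `m` from `i`. -/
lemma card_near_le (n k m : ℕ) (i : Fin n) :
    (Finset.univ.filter fun y : Fin n =>
      cdist n ((k + (y : ℕ)) % n + 1) ((i : ℕ) + 1) < m).card ≤ 2 * m := by
  have hn : 0 < n := i.pos
  rw [← Finset.card_range (2 * m)]
  -- Rotating by `k - i + m` moves the window into `{0, …, 2m - 1}`.
  refine Finset.card_le_card_of_injOn
    (fun y : Fin n => ((k + (y : ℕ)) % n + ((n - (i : ℕ)) + m)) % n) ?_ ?_
  · intro y hy
    replace hy := (Finset.mem_filter.1 hy).2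
    simp only [cdist, Nat.dist] at hy
    simp only [Finset.coe_range, Set.mem_Iio]
    have hz : (k + (y : ℕ)) % n < n := Nat.mod_lt _ hn
    have hi := i.isLt
    generalize (k + (y : ℕ)) % n = z at *
    have key : ∀ u v : ℕ, u < 2 * m → (z + (n - (i : ℕ) + m) = u + n * v) →
        (z + (n - (i : ℕ) + m)) % n < 2 * m := by
      intro u v hu he
      rw [he, Nat.add_mul_mod_self_left]
      exact (Nat.mod_le _ _).trans_lt hu
    rcases lt_or_ge z (i : ℕ) with h | h
    · by_cases h2 : (i : ℕ) - z < m
      · exact key (z + m - i) 1 (by omega) (by omega)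
      · exact key (z + (n - (i : ℕ) + m)) 0 (by omega) (by omega)
    · by_cases h2 : z - i < m
      · exact key (z + m - i) 1 (by omega) (by omega)
      · exact key (z - i + m - n) 2 (by omega) (by omega)
  · intro x _ y _ hxy
    have h1 : (k + (x : ℕ)) % n + (n - (i : ℕ) + m) ≡ (k + (y : ℕ)) % n + (n - (i : ℕ) + m) [MOD n] :=
      hxy
    have h2 := Nat.ModEq.add_right_cancel' _ h1
    have h3 : k + (x : ℕ) ≡ k + (y : ℕ) [MOD n] :=
      ((Nat.mod_modEq _ _).symm.trans h2).trans (Nat.mod_modEq _ _)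
    have h4 := Nat.ModEq.add_left_cancel' _ h3
    exact Fin.ext (Nat.ModEq.eq_of_lt_of_lt h4 x.isLt y.isLt)

/-- First moment bound for the number of permutations that are not `(b, c)`-bumpy. -/
lemma card_not_bumpy_le (b c : ℝ) (hc0 : 0 < c) (n : ℕ) :
    (Nat.card {ω : Equiv.Perm (Fin n) // ¬ BCBumpy b c n ω} : ℝ)
        * (⌈(1 - c) * n⌉₊.factorial : ℝ)
      ≤ n * (n.factorial * ((2 * ⌈b * n⌉₊ : ℕ) : ℝ) ^ ⌈(1 - c) * n⌉₊) := by
  classical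
  set s := ⌈(1 - c) * n⌉₊ with hs
  set m := ⌈b * n⌉₊ with hm
  let F : ℕ → Fin n → Finset (Fin n) := fun k i => Finset.univ.filter fun y : Fin n =>
    cdist n ((k + (y : ℕ)) % n + 1) ((i : ℕ) + 1) < m
  have hsn : s ≤ Fintype.card (Fin n) := by
    rw [Fintype.card_fin, hs]
    refine Nat.ceil_le.2 ?_
    nlinarith [(Nat.cast_nonneg n : (0 : ℝ) ≤ n)]
  have hsub : (Finset.univ.filter fun ω : Equiv.Perm (Fin n) => ¬ BCBumpy b c n ω) ⊆
      (Finset.range n).biUnion fun k => Finset.univ.filter fun ω : Equiv.Perm (Fin n) =>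
        s ≤ (Finset.univ.filter fun a => ω a ∈ F k a).card := by
    intro ω hω
    replace hω := (Finset.mem_filter.1 hω).2
    unfold BCBumpy at hω
    push Not at hω
    obtain ⟨k, hk, hlt⟩ := hω
    simp only [Finset.mem_biUnion, Finset.mem_range, Finset.mem_filter, Finset.mem_univ, true_and]
    refine ⟨k, hk, Nat.ceil_le.2 ?_⟩
    rw [Nat.card_eq_fintype_card, Fintype.card_subtype] at hlt
    have hsum := Finset.card_filter_add_card_filter_not (s := (Finset.univ : Finset (Fin n)))
      (fun i : Fin n => b * (n : ℝ) ≤ (cdist n ((k + (ω i : ℕ)) % n + 1) ((i : ℕ) + 1) : ℝ))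
    have heq : (Finset.univ.filter fun a => ω a ∈ F k a) = Finset.univ.filter fun i : Fin n =>
        ¬ b * (n : ℝ) ≤ (cdist n ((k + (ω i : ℕ)) % n + 1) ((i : ℕ) + 1) : ℝ) := by
      ext i
      simp only [F, Finset.mem_filter, Finset.mem_univ, true_and, not_le, hm, Nat.lt_ceil]
    rw [heq]
    have hsum' := congrArg (Nat.cast : ℕ → ℝ) hsum
    push_cast [Finset.card_univ, Fintype.card_fin] at hsum'
    linarith
  have hnat : Nat.card {ω : Equiv.Perm (Fin n) // ¬ BCBumpy b c n ω} * s.factorial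
      ≤ n * (n.factorial * (2 * m) ^ s) := by
    rw [Nat.card_eq_fintype_card, Fintype.card_subtype]
    calc _ ≤ (∑ k ∈ Finset.range n, (Finset.univ.filter fun ω : Equiv.Perm (Fin n) =>
          s ≤ (Finset.univ.filter fun a => ω a ∈ F k a).card).card) * s.factorial :=
          Nat.mul_le_mul_right _ ((Finset.card_le_card hsub).trans Finset.card_biUnion_le)
      _ ≤ ∑ k ∈ Finset.range n, n.factorial * (2 * m) ^ s := by
          rw [Finset.sum_mul]
          refine Finset.sum_le_sum fun k _ => ?_
          have := card_perm_many_le (F k) (2 * m) s (fun i => card_near_le n k m i) hsn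
          rwa [Fintype.card_fin] at this
      _ = _ := by simp
  exact_mod_cast hnat

/-- The tail estimate `W ^ s / s! ≤ (e W / s) ^ s`. -/
lemma pow_le_factorial_mul (W r : ℝ) (s : ℕ) (hs : 0 < s) (hW : 0 ≤ W)
    (h : W * Real.exp 1 ≤ r * s) : W ^ s ≤ r ^ s * s.factorial := by
  have hspos : (0 : ℝ) < s := by exact_mod_cast hs
  have h1 : (s : ℝ) ^ s ≤ Real.exp 1 ^ s * s.factorial := by
    have := Real.pow_div_factorial_le_exp (s : ℝ) hspos.le s
    rw [div_le_iff₀ (by positivity)] at this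
    rwa [← Real.exp_nat_mul, mul_one]
  have h2 : (W * Real.exp 1) ^ s ≤ (r * s) ^ s := pow_le_pow_left₀ (by positivity) h s
  have hr : 0 ≤ r := by
    by_contra! hneg
    nlinarith [mul_nonneg hW (Real.exp_pos 1).le]
  rw [mul_pow, mul_pow] at h2
  have he : 0 < Real.exp 1 ^ s := by positivity
  refine le_of_mul_le_mul_right ?_ he
  calc _ ≤ r ^ s * (s : ℝ) ^ s := h2
    _ ≤ r ^ s * (Real.exp 1 ^ s * s.factorial) := by gcongr
    _ = _ := by ring

/-- Remark 5.3: for `0 < b < 1/2`, `0 < c < min {4b, 1}` and `2eb + c < 1`, the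
proportion of `(b, c)`-bumpy permutations in `S_n` tends to `1` as `n → ∞`. -/
theorem almost_all_bc_bumpy (b c : ℝ) (hb0 : 0 < b) (hb : b < 1 / 2)
    (hc0 : 0 < c) (hc : c < min (4 * b) 1)
    (hbc : 2 * Real.exp 1 * b + c < 1) :
    Filter.Tendsto (fun n : ℕ =>
      (Nat.card {ω : Equiv.Perm (Fin n) // BCBumpy b c n ω} : ℝ) / (n.factorial : ℝ))
      Filter.atTop (nhds 1) := by
  classical
  have he : 0 < Real.exp 1 := Real.exp_pos 1
  have hc1 : 0 < 1 - c := by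
    have := hc.trans_le (min_le_right _ _)
    linarith
  -- `r` is the midpoint of `2 e b / (1 - c)` and `1`.
  obtain ⟨r, hr0, hr1, hr⟩ : ∃ r : ℝ, 0 < r ∧ r < 1 ∧
      r * (1 - c) = (2 * Real.exp 1 * b + (1 - c)) / 2 := by
    refine ⟨(2 * Real.exp 1 * b + (1 - c)) / 2 / (1 - c), by positivity, ?_, ?_⟩
    · rw [div_lt_one hc1]; linarith
    · field_simp
  set q : ℝ := r ^ (1 - c) with hq
  have hq0 : 0 ≤ q := Real.rpow_nonneg hr0.le _
  have hq1 : q < 1 := Real.rpow_lt_one hr0.le hr1 hc1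
  have hlim : Filter.Tendsto (fun n : ℕ => 1 - (n : ℝ) * q ^ n) Filter.atTop (nhds 1) := by
    simpa using (tendsto_self_mul_const_pow_of_lt_one hq0 hq1).const_sub 1
  have hcard : ∀ n : ℕ, (Nat.card {ω : Equiv.Perm (Fin n) // BCBumpy b c n ω} : ℝ)
      + (Nat.card {ω : Equiv.Perm (Fin n) // ¬ BCBumpy b c n ω} : ℝ) = n.factorial := by
    intro n
    have := Finset.card_filter_add_card_filter_not
      (s := (Finset.univ : Finset (Equiv.Perm (Fin n)))) (fun ω => BCBumpy b c n ω)
    rw [Finset.card_univ, Fintype.card_perm, Fintype.card_fin] at this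
    rw [Nat.card_eq_fintype_card, Nat.card_eq_fintype_card, Fintype.card_subtype,
      Fintype.card_subtype]
    exact_mod_cast this
  refine tendsto_of_tendsto_of_tendsto_of_le_of_le' hlim tendsto_const_nhds ?_ ?_
  · have hδ : 0 < (1 - c - 2 * Real.exp 1 * b) / 2 := by linarith
    filter_upwards [Filter.eventually_ge_atTop 1, Filter.eventually_ge_atTop
      ⌈2 * Real.exp 1 / ((1 - c - 2 * Real.exp 1 * b) / 2)⌉₊] with n hn1 hn2
    have hn0 : (0 : ℝ) < n := by exact_mod_cast hn1
    have hn3 : 2 * Real.exp 1 ≤ n * ((1 - c - 2 * Real.exp 1 * b) / 2) :=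
      (div_le_iff₀ hδ).1 (Nat.ceil_le.1 hn2)
    have hmain := card_not_bumpy_le b c hc0 n
    set s := ⌈(1 - c) * n⌉₊ with hs
    have hsle : (1 - c) * n ≤ s := Nat.le_ceil _
    have hspos : 0 < s := Nat.ceil_pos.2 (by positivity)
    have hm : (⌈b * n⌉₊ : ℝ) < b * n + 1 := Nat.ceil_lt_add_one (by positivity)
    have hW : ((2 * ⌈b * n⌉₊ : ℕ) : ℝ) * Real.exp 1 ≤ r * s := by
      push_cast
      calc 2 * (⌈b * n⌉₊ : ℝ) * Real.exp 1 ≤ 2 * (b * n + 1) * Real.exp 1 := by gcongr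
        _ ≤ r * (1 - c) * n := by rw [hr]; linarith
        _ = r * ((1 - c) * n) := by ring
        _ ≤ r * s := by gcongr
    have hpow := pow_le_factorial_mul _ r s hspos (Nat.cast_nonneg _) hW
    have hrq : r ^ s ≤ q ^ n := by
      rw [hq, ← Real.rpow_natCast, ← Real.rpow_natCast, ← Real.rpow_mul hr0.le]
      exact Real.rpow_le_rpow_of_exponent_ge hr0 hr1.le hsle
    have hsf : (0 : ℝ) < s.factorial := by positivity
    have hnf : (0 : ℝ) < n.factorial := by positivity
    have hbad : (Nat.card {ω : Equiv.Perm (Fin n) // ¬ BCBumpy b c n ω} : ℝ)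
        ≤ n * q ^ n * n.factorial := by
      refine le_of_mul_le_mul_right (hmain.trans ?_) hsf
      calc _ ≤ (n : ℝ) * (n.factorial * (q ^ n * s.factorial)) := by
            gcongr
            exact hpow.trans (by gcongr)
        _ = _ := by ring
    rw [le_div_iff₀ hnf]
    linarith [hcard n]
  · refine Filter.Eventually.of_forall fun n => ?_
    refine div_le_one_of_le₀ ?_ (by positivity)
    rw [← hcard n]
    exact le_add_of_nonneg_right (Nat.cast_nonneg _)
end
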